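/- (Ramanujan's ₁ψ₁ summation formula.) Let q, a, b, x ∈ ℂ with 0 < |q| < 1 and |b/a| < |x| < 1, and assume a ≠ 0, x ≠ 0, and that neither a nor b equals q^m for any integer m. Then the bilateral series converges absolutely and ∑_{n=−∞}^{∞} [(a;q)_n / (b;q)_n] · x^n = (q;q)_∞ (b/a;q)_∞ (ax;q)_∞ (q/(ax);q)_∞ / ((b;q)_∞ (q/a;q)_∞ (x;q)_∞ (b/(ax);q)_∞). -/

import Mathlib

/-- The finite q-Pochhammer symbol `(a;q)_k = ∏_{i=0}^{k-1} (1 - a qⁱ)`. -/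
noncomputable def qPoch (a q : ℂ) (k : ℕ) : ℂ :=
  ∏ i ∈ Finset.range k, (1 - a * q ^ i)

/-- The infinite q-Pochhammer symbol `(a;q)_∞ = ∏_{i=0}^{∞} (1 - a qⁱ)`. -/
noncomputable def qPochInf (a q : ℂ) : ℂ :=
  ∏' i : ℕ, (1 - a * q ^ i)

/-- The q-Pochhammer symbol extended to an arbitrary integer index:
`(a;q)_k = (a;q)_∞ / (a q^k;q)_∞`. -/
noncomputable def qPochInt (a q : ℂ) (k : ℤ) : ℂ :=
  qPochInf a q / qPochInf (a * q ^ k) q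

open Filter Topology

theorem qp_summ (z q : ℂ) (hq1 : ‖q‖ < 1) : Summable (fun i : ℕ => ‖-(z * q ^ i)‖) := by
  simp only [norm_neg, norm_mul, norm_pow]
  exact (summable_geometric_of_lt_one (norm_nonneg _) hq1).mul_left _

theorem qp_mult (z q : ℂ) (hq1 : ‖q‖ < 1) : Multipliable (fun i : ℕ => (1 - z * q ^ i)) := by
  have := multipliable_one_add_of_summable (qp_summ z q hq1)
  simpa [sub_eq_add_neg] using this

theorem qp_lim (z q : ℂ) (hq1 : ‖q‖ < 1) :
    Tendsto (fun N : ℕ => ∏ i ∈ Finset.range N, (1 - z * q ^ i)) atTop (𝓝 (qPochInf z q)) :=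
  (qp_mult z q hq1).hasProd.tendsto_prod_nat

theorem qp_ne (z q : ℂ) (hq1 : ‖q‖ < 1) (h : ∀ i : ℕ, 1 - z * q ^ i ≠ 0) :
    qPochInf z q ≠ 0 := by
  have := tprod_one_add_ne_zero_of_summable (f := fun i : ℕ => -(z * q ^ i))
    (fun i => by simpa [sub_eq_add_neg] using h i) (qp_summ z q hq1)
  simpa [qPochInf, sub_eq_add_neg] using this

theorem qp_ne_small (z q : ℂ) (hq1 : ‖q‖ < 1) (h : ‖z‖ < 1) : qPochInf z q ≠ 0 := by
  refine qp_ne z q hq1 fun i hi => ?_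
  have h1 : ‖z * q ^ i‖ < 1 := by
    rw [norm_mul, norm_pow]
    calc ‖z‖ * ‖q‖ ^ i ≤ ‖z‖ * 1 := by
          gcongr; exact pow_le_one₀ (norm_nonneg _) hq1.le
      _ < 1 := by simpa
  rw [← sub_eq_zero.mp hi] at h1
  simp at h1

theorem qp_ne_zpow (z q : ℂ) (hq0 : q ≠ 0) (hq1 : ‖q‖ < 1) (h : ∀ m : ℤ, z ≠ q ^ m) :
    qPochInf z q ≠ 0 := by
  refine qp_ne z q hq1 fun i hi => ?_
  apply h (-i)
  rw [zpow_neg, zpow_natCast]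
  have := sub_eq_zero.mp hi
  field_simp
  exact this.symm

theorem qp_step (z q : ℂ) (hq1 : ‖q‖ < 1) :
    qPochInf z q = (1 - z) * qPochInf (z * q) q := by
  have h : qPochInf z q = _ := tprod_eq_zero_mul' (f := fun i : ℕ => (1 - z * q ^ i)) (by
    have := qp_mult (z * q) q hq1
    refine this.congr fun i => ?_
    ring)
  rw [h]
  simp only [pow_zero, mul_one, qPochInf]
  congr 1
  refine tprod_congr fun i => ?_
  ring

theorem qp_iter (z q : ℂ) (hq1 : ‖q‖ < 1) (N : ℕ) :
    qPochInf z q = (∏ i ∈ Finset.range N, (1 - z * q ^ i)) * qPochInf (z * q ^ N) q := by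
  induction N with
  | zero => simp
  | succ n ih =>
    rw [ih, Finset.prod_range_succ, qp_step (z * q ^ n) q hq1, pow_succ]
    ring_nf

theorem qp_tend (z q : ℂ) (hq1 : ‖q‖ < 1) :
    Tendsto (fun N : ℕ => qPochInf (z * q ^ N) q) atTop (𝓝 1) := by
  have key : ∀ w : ℂ, ‖w‖ < 1 → Tendsto (fun N : ℕ => qPochInf (w * q ^ N) q) atTop (𝓝 1) := by
    intro w hw
    have h0 := qp_ne_small w q hq1 hw
    have h1 : Tendsto (fun N : ℕ => qPochInf w q / ∏ i ∈ Finset.range N, (1 - w * q ^ i)) atTop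
        (𝓝 (qPochInf w q / qPochInf w q)) := tendsto_const_nhds.div (qp_lim w q hq1) h0
    rw [div_self h0] at h1
    refine h1.congr fun N => ?_
    have h2 := qp_iter w q hq1 N
    have h3 : (∏ i ∈ Finset.range N, (1 - w * q ^ i)) ≠ 0 := by
      intro h; rw [h, zero_mul] at h2; exact h0 h2
    rw [div_eq_iff h3, mul_comm]; exact h2
  have h0 : Tendsto (fun M : ℕ => ‖z * q ^ M‖) atTop (𝓝 0) := by
    have := (tendsto_pow_atTop_nhds_zero_of_norm_lt_one hq1).const_mul z
    simpa using this.norm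
  obtain ⟨M, hM⟩ := (h0.eventually_lt_const zero_lt_one).exists
  have := key _ hM
  rw [← tendsto_add_atTop_iff_nat M]
  refine this.congr fun N => ?_
  rw [mul_assoc, ← pow_add, add_comm]

theorem qp_zero (q : ℂ) : qPochInf 0 q = 1 := by simp [qPochInf]

theorem qp_bound (w q : ℂ) (r : ℝ) (hq1 : ‖q‖ < 1) (h : ‖w‖ ≤ r) :
    ‖qPochInf w q‖ ≤ ‖qPochInf (-(r : ℂ)) (‖q‖ : ℂ)‖ := by
  have hq1' : ‖(‖q‖ : ℂ)‖ < 1 := by simpa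
  refine le_of_tendsto_of_tendsto' (qp_lim w q hq1).norm (qp_lim _ _ hq1').norm fun N => ?_
  rw [norm_prod, norm_prod]
  refine Finset.prod_le_prod (fun _ _ => norm_nonneg _) fun i _ => ?_
  have hr : 0 ≤ r := (norm_nonneg _).trans h
  have e : (1 - -(r : ℂ) * (‖q‖ : ℂ) ^ i) = ((1 + r * ‖q‖ ^ i : ℝ) : ℂ) := by push_cast; ring
  rw [e, Complex.norm_real, Real.norm_of_nonneg (by positivity)]
  refine (norm_sub_le _ _).trans ?_
  rw [norm_one, norm_mul, norm_pow]
  gcongr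

theorem qp_dom (q a x : ℂ) (β : ℝ) (hβ : 0 ≤ β) (hq0 : q ≠ 0) (hq1 : ‖q‖ < 1) (ha0 : a ≠ 0)
    (hx0 : x ≠ 0) (ham : ∀ m : ℤ, a ≠ q ^ m) (hx1 : β < ‖a‖ * ‖x‖) (hx2 : ‖x‖ < 1) :
    Summable (fun n : ℤ => ‖qPochInf (-((β * ‖q‖ ^ n : ℝ) : ℂ)) (‖q‖ : ℂ)‖ /
      ‖qPochInf (a * q ^ n) q‖ * ‖x‖ ^ n) := by
  have hρ : ‖(‖q‖ : ℂ)‖ < 1 := by simpa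
  have hρ0 : 0 < ‖q‖ := norm_pos_iff.mpr hq0
  have hxp : 0 < ‖x‖ := norm_pos_iff.mpr hx0
  apply Summable.of_nat_of_neg_add_one
  · have h1 := ((qp_tend (-(β : ℂ)) (‖q‖ : ℂ) hρ).norm.div (qp_tend a q hq1).norm (by simp))
    obtain ⟨C, hC⟩ := h1.bddAbove_range
    refine Summable.of_nonneg_of_le (fun _ => by positivity) (fun n => ?_)
      ((summable_geometric_of_lt_one (norm_nonneg x) hx2).mul_left C)
    have := hC ⟨n, rfl⟩
    simp only [zpow_natCast]
    push_cast
    rw [← neg_mul]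
    gcongr
    exact this
  · have hlim : Tendsto (fun k : ℕ => (‖q‖ ^ (k + 2) + β) / (‖q ^ (k + 2) - a‖ * ‖x‖)) atTop
        (𝓝 ((0 + β) / (‖0 - a‖ * ‖x‖))) := by
      have h1 : Tendsto (fun k : ℕ => ‖q‖ ^ (k + 2)) atTop (𝓝 0) :=
        (tendsto_add_atTop_iff_nat 2).mpr (tendsto_pow_atTop_nhds_zero_of_lt_one hρ0.le hq1)
      have h2 : Tendsto (fun k : ℕ => q ^ (k + 2)) atTop (𝓝 0) :=
        (tendsto_add_atTop_iff_nat 2).mpr (tendsto_pow_atTop_nhds_zero_of_norm_lt_one hq1)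
      refine (h1.add_const β).div ((h2.sub_const a).norm.mul_const _) ?_
      simp [ha0, hx0]
    have hlt : (0 + β) / (‖0 - a‖ * ‖x‖) < 1 := by
      rw [div_lt_one (by simp; positivity)]; simpa
    obtain ⟨r, hr1, hr2⟩ := exists_between hlt
    refine summable_of_ratio_norm_eventually_le hr2 ?_
    filter_upwards [hlim.eventually_le_const hr1] with k hk
    set n : ℤ := -((k : ℤ) + 1) with hn
    have hn' : -(((k + 1 : ℕ) : ℤ) + 1) = n - 1 := by rw [hn]; push_cast; ring
    rw [hn']
    have e1 : qPochInf (-((β * ‖q‖ ^ (n - 1) : ℝ) : ℂ)) (‖q‖ : ℂ) =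
        ((1 + β * ‖q‖ ^ (n - 1) : ℝ) : ℂ) * qPochInf (-((β * ‖q‖ ^ n : ℝ) : ℂ)) (‖q‖ : ℂ) := by
      rw [qp_step _ _ hρ]
      congr 1
      · push_cast; ring
      · congr 1
        rw [zpow_sub_one₀ hρ0.ne']
        have hρc : (‖q‖ : ℂ) ≠ 0 := by exact_mod_cast hρ0.ne'
        push_cast
        field_simp
    have e2 : qPochInf (a * q ^ (n - 1)) q = (1 - a * q ^ (n - 1)) * qPochInf (a * q ^ n) q := by
      rw [qp_step _ _ hq1]
      congr 2
      rw [zpow_sub_one₀ hq0]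
      field_simp
    have e3 : q ^ (n - 1) = (q ^ (k + 2))⁻¹ := by
      rw [← zpow_natCast, ← zpow_neg]; congr 1
    have e4 : ‖q‖ ^ (n - 1) = (‖q‖ ^ (k + 2))⁻¹ := by
      rw [← zpow_natCast, ← zpow_neg]; congr 1
    rw [e1, e2, zpow_sub_one₀ hxp.ne']
    rw [norm_mul, norm_mul, Complex.norm_real, Real.norm_of_nonneg (r := 1 + _) (by positivity)]
    rw [Real.norm_of_nonneg (by positivity)]
    have e5 : (1 + β * ‖q‖ ^ (n - 1)) / (‖1 - a * q ^ (n - 1)‖ * ‖x‖) =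
        (‖q‖ ^ (k + 2) + β) / (‖q ^ (k + 2) - a‖ * ‖x‖) := by
      have : 1 - a * q ^ (n - 1) = (q ^ (k + 2) - a) / q ^ (k + 2) := by
        rw [e3]; field_simp
      rw [this, e4, norm_div, norm_pow]
      field_simp
    rw [← e5] at hk
    calc _ = (1 + β * ‖q‖ ^ (n - 1)) / (‖1 - a * q ^ (n - 1)‖ * ‖x‖) *
          (‖qPochInf (-((β * ‖q‖ ^ n : ℝ) : ℂ)) (‖q‖ : ℂ)‖ /
      ‖qPochInf (a * q ^ n) q‖ * ‖x‖ ^ n) := by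
            rw [Real.norm_of_nonneg (r := ‖x‖ ^ n * ‖x‖⁻¹) (by positivity)]
            rw [norm_mul, mul_div_mul_comm, ← div_div]; ring
      _ ≤ _ := by
          rw [Real.norm_of_nonneg (by positivity)]
          exact mul_le_mul_of_nonneg_right hk (by positivity)

/-- The normalised bilateral term. -/
noncomputable def psiT (q a b x : ℂ) (n : ℤ) : ℂ :=
  qPochInf (b * q ^ n) q / qPochInf (a * q ^ n) q * x ^ n

theorem psiT_bound (q a b b' x : ℂ) (hq1 : ‖q‖ < 1) (hb : ‖b'‖ ≤ ‖b‖) (n : ℤ) :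
    ‖psiT q a b' x n‖ ≤ ‖qPochInf (-((‖b‖ * ‖q‖ ^ n : ℝ) : ℂ)) (‖q‖ : ℂ)‖ /
      ‖qPochInf (a * q ^ n) q‖ * ‖x‖ ^ n := by
  rw [psiT, norm_mul, norm_div, norm_zpow]
  gcongr
  refine qp_bound _ _ _ hq1 ?_
  rw [norm_mul, norm_zpow]
  gcongr

theorem psiT_summable (q a b x : ℂ) (hq0 : q ≠ 0) (hq1 : ‖q‖ < 1) (ha0 : a ≠ 0)
    (hx0 : x ≠ 0) (ham : ∀ m : ℤ, a ≠ q ^ m) (hx1 : ‖b‖ < ‖a‖ * ‖x‖) (hx2 : ‖x‖ < 1) :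
    Summable (psiT q a b x) :=
  Summable.of_norm_bounded (qp_dom q a x ‖b‖ (norm_nonneg _) hq0 hq1 ha0 hx0 ham hx1 hx2)
    (psiT_bound q a b b x hq1 le_rfl)

theorem psi_feq (q a b x : ℂ) (hq0 : q ≠ 0) (hq1 : ‖q‖ < 1) (ha0 : a ≠ 0)
    (hx0 : x ≠ 0) (ham : ∀ m : ℤ, a ≠ q ^ m) (hx1 : ‖b‖ < ‖a‖ * ‖x‖) (hx2 : ‖x‖ < 1) :
    (∑' n, psiT q a b x n) * (1 - b / (a * x)) =
      (1 - b / a) * ∑' n, psiT q a (b * q) x n := by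
  have hρ0 : 0 < ‖q‖ := norm_pos_iff.mpr hq0
  have hs := psiT_summable q a b x hq0 hq1 ha0 hx0 ham hx1 hx2
  have hA := psiT_summable q a (b * q) x hq0 hq1 ha0 hx0 ham (by
    rw [norm_mul]
    exact (mul_le_of_le_one_right (norm_nonneg _) hq1.le).trans_lt hx1) hx2
  have hB := psiT_summable q a (b * q) (x * q) hq0 hq1 ha0 (mul_ne_zero hx0 hq0) ham (by
    rw [norm_mul, norm_mul, ← mul_assoc]
    gcongr) (by
    rw [norm_mul]
    exact (mul_le_of_le_one_right (norm_nonneg _) hq1.le).trans_lt hx2)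
  have hPa : ∀ n : ℤ, qPochInf (a * q ^ n) q ≠ 0 := fun n => by
    refine qp_ne_zpow _ _ hq0 hq1 fun m hm => ham (m - n) ?_
    rw [zpow_sub₀ hq0, ← hm]; field_simp
  have h1 : ∀ n, psiT q a b x n = psiT q a (b * q) x n - b * psiT q a (b * q) (x * q) n := by
    intro n
    simp only [psiT]
    rw [qp_step (b * q ^ n) q hq1, mul_zpow]
    have : b * q ^ n * q = b * q * q ^ n := by ring
    rw [this]; ring
  have h2 : ∀ n, psiT q a b x (n + 1) =
      x * (psiT q a (b * q) x n - a * psiT q a (b * q) (x * q) n) := by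
    intro n
    simp only [psiT]
    have e := qp_step (a * q ^ n) q hq1
    have h3 := hPa n
    have h4 := hPa (n + 1)
    have e1 : b * q ^ (n + 1) = b * q * q ^ n := by rw [zpow_add_one₀ hq0]; ring
    have e2 : a * q ^ n * q = a * q ^ (n + 1) := by rw [zpow_add_one₀ hq0]; ring
    rw [e2] at e
    have h5 : 1 - a * q ^ n ≠ 0 := by
      intro h; rw [h, zero_mul] at e; exact h3 e
    rw [e1, e, mul_zpow, zpow_add_one₀ hx0]
    have h6 : ∀ u v w : ℂ, v ≠ 0 → w ≠ 0 → u / w = v * (u / (v * w)) := by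
      intro u v w hv hw; field_simp
    rw [h6 _ _ _ h5 h4]
    ring
  have E1 : ∑' n, psiT q a b x n =
      ∑' n, psiT q a (b * q) x n - b * ∑' n, psiT q a (b * q) (x * q) n := by
    rw [tsum_congr h1, hA.tsum_sub (hB.mul_left b), tsum_mul_left]
  have E2 : ∑' n, psiT q a b x n =
      x * (∑' n, psiT q a (b * q) x n - a * ∑' n, psiT q a (b * q) (x * q) n) := by
    rw [← (Equiv.addRight (1 : ℤ)).tsum_eq]
    simp only [Equiv.coe_addRight]
    rw [tsum_congr h2, tsum_mul_left, hA.tsum_sub (hB.mul_left a), tsum_mul_left]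
  field_simp
  linear_combination (a * x) * E1 - b * E2

theorem psi_zero (q a b x : ℂ) (hq0 : q ≠ 0) (hq1 : ‖q‖ < 1) (ha0 : a ≠ 0)
    (hx0 : x ≠ 0) (ham : ∀ m : ℤ, a ≠ q ^ m) (hx1 : ‖b‖ < ‖a‖ * ‖x‖) (hx2 : ‖x‖ < 1) :
    (∑' n, psiT q a b x n) * qPochInf (b / (a * x)) q =
      qPochInf (b / a) q * ∑' n, psiT q a 0 x n := by
  have hle : ∀ N : ℕ, ‖b * q ^ N‖ ≤ ‖b‖ := fun N => by
    rw [norm_mul, norm_pow]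
    exact mul_le_of_le_one_right (norm_nonneg _) (pow_le_one₀ (norm_nonneg _) hq1.le)
  have hit : ∀ N : ℕ, (∑' n, psiT q a b x n) *
        ∏ i ∈ Finset.range N, (1 - b / (a * x) * q ^ i) =
      (∏ i ∈ Finset.range N, (1 - b / a * q ^ i)) * ∑' n, psiT q a (b * q ^ N) x n := by
    intro N
    induction N with
    | zero => simp
    | succ N ih =>
      have h := psi_feq q a (b * q ^ N) x hq0 hq1 ha0 hx0 ham ((hle N).trans_lt hx1) hx2
      rw [Finset.prod_range_succ, Finset.prod_range_succ, ← mul_assoc, ih, pow_succ, ← mul_assoc b]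
      rw [mul_assoc _ (1 - _) (tsum _), div_mul_eq_mul_div b a, ← h]
      ring
  have hlim : Tendsto (fun N : ℕ => ∑' n, psiT q a (b * q ^ N) x n) atTop
      (𝓝 (∑' n, psiT q a 0 x n)) := by
    refine tendsto_tsum_of_dominated_convergence
      (qp_dom q a x ‖b‖ (norm_nonneg _) hq0 hq1 ha0 hx0 ham hx1 hx2) (fun n => ?_)
      (Eventually.of_forall fun N n => psiT_bound q a b _ x hq1 (hle N) n)
    simp only [psiT, zero_mul, qp_zero]
    refine Tendsto.mul_const _ (Tendsto.div_const ?_ _)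
    refine (qp_tend (b * q ^ n) q hq1).congr fun N => ?_
    congr 1; ring
  exact tendsto_nhds_unique ((qp_lim _ _ hq1).const_mul _)
    (((qp_lim (b / a) q hq1).mul hlim).congr fun N => (hit N).symm)

theorem q_binom (q a x : ℂ) (hq0 : q ≠ 0) (hq1 : ‖q‖ < 1)
    (ham : ∀ m : ℤ, a ≠ q ^ m) (hx2 : ‖x‖ < 1) :
    (∑' n : ℕ, qPochInf (q * q ^ n) q / qPochInf (a * q ^ n) q * x ^ n) * qPochInf x q =
      qPochInf (a * x) q * (qPochInf q q / qPochInf a q) := by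
  set c : ℕ → ℂ := fun n => qPochInf (q * q ^ n) q / qPochInf (a * q ^ n) q with hc
  have hPa : ∀ n : ℕ, qPochInf (a * q ^ n) q ≠ 0 := fun n => by
    refine qp_ne_zpow _ _ hq0 hq1 fun m hm => ham (m - n) ?_
    rw [zpow_sub₀ hq0, ← hm, zpow_natCast]; field_simp
  have hcl : Tendsto c atTop (𝓝 (1 / 1)) := (qp_tend q q hq1).div (qp_tend a q hq1) one_ne_zero
  obtain ⟨C, hC⟩ := hcl.norm.bddAbove_range
  have hC' : ∀ n, ‖c n‖ ≤ C := fun n => hC ⟨n, rfl⟩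
  have hbd : ∀ y : ℂ, ‖y‖ ≤ ‖x‖ → ∀ n, ‖c n * y ^ n‖ ≤ C * ‖x‖ ^ n := by
    intro y hy n
    rw [norm_mul, norm_pow]
    have := hC' n
    have h0 : 0 ≤ C := (norm_nonneg _).trans this
    gcongr
  have hg := (summable_geometric_of_lt_one (norm_nonneg x) hx2).mul_left C
  have hsum : ∀ y : ℂ, ‖y‖ ≤ ‖x‖ → Summable fun n => c n * y ^ n :=
    fun y hy => Summable.of_norm_bounded hg (hbd y hy)
  have hrec : ∀ n, c (n + 1) * (1 - q ^ (n + 1)) = (1 - a * q ^ n) * c n := by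
    intro n
    have e := qp_step (a * q ^ n) q hq1
    have e' := qp_step (q * q ^ n) q hq1
    have h3 := hPa n
    have h4 := hPa (n + 1)
    have e2 : a * q ^ n * q = a * q ^ (n + 1) := by ring
    have e3 : q * q ^ n * q = q * q ^ (n + 1) := by ring
    rw [e2] at e
    rw [e3] at e'
    have h5 : 1 - a * q ^ n ≠ 0 := by
      intro h; rw [h, zero_mul] at e; exact h3 e
    simp only [hc]
    rw [e', e]
    field_simp
    ring
  have hle : ∀ N : ℕ, ‖x * q ^ N‖ ≤ ‖x‖ := fun N => by
    rw [norm_mul, norm_pow]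
    exact mul_le_of_le_one_right (norm_nonneg _) (pow_le_one₀ (norm_nonneg _) hq1.le)
  have feq : ∀ y : ℂ, ‖y‖ ≤ ‖x‖ → ‖y * q‖ ≤ ‖x‖ →
      (∑' n, c n * y ^ n) * (1 - y) = (1 - a * y) * ∑' n, c n * (y * q) ^ n := by
    intro y hy hyq
    have s1 := hsum y hy
    have s2 := hsum _ hyq
    have h1 : ∑' n, (c n * y ^ n - c n * (y * q) ^ n) =
        y * (∑' n, c n * y ^ n - a * ∑' n, c n * (y * q) ^ n) := by
      rw [(s1.sub s2).tsum_eq_zero_add, ← tsum_mul_left, ← s1.tsum_sub (s2.mul_left a),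
        ← tsum_mul_left]
      simp only [pow_zero, sub_self, zero_add]
      refine tsum_congr fun n => ?_
      rw [mul_pow, mul_pow]
      linear_combination y ^ (n + 1) * hrec n
    rw [s1.tsum_sub s2] at h1
    linear_combination h1
  have hit : ∀ N : ℕ, (∑' n, c n * x ^ n) * ∏ i ∈ Finset.range N, (1 - x * q ^ i) =
      (∏ i ∈ Finset.range N, (1 - a * x * q ^ i)) * ∑' n, c n * (x * q ^ N) ^ n := by
    intro N
    induction N with
    | zero => simp
    | succ N ih =>
      have h := feq (x * q ^ N) (hle N) (by
        have := hle (N + 1); rwa [pow_succ, ← mul_assoc] at this)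
      rw [Finset.prod_range_succ, Finset.prod_range_succ, ← mul_assoc, ih, pow_succ, ← mul_assoc x,
        mul_assoc _ (1 - _) (tsum _), mul_assoc a x, ← h]
      ring
  have hlim : Tendsto (fun N : ℕ => ∑' n, c n * (x * q ^ N) ^ n) atTop
      (𝓝 (∑' n, c n * 0 ^ n)) := by
    refine tendsto_tsum_of_dominated_convergence hg (fun n => ?_)
      (Eventually.of_forall fun N n => hbd _ (hle N) n)
    refine Tendsto.const_mul _ (Tendsto.pow ?_ n)
    simpa using (tendsto_pow_atTop_nhds_zero_of_norm_lt_one hq1).const_mul x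
  have h0 : ∑' n, c n * 0 ^ n = qPochInf q q / qPochInf a q := by
    rw [tsum_eq_single 0 (fun n hn => by simp [hn])]
    simp [hc]
  rw [h0] at hlim
  exact tendsto_nhds_unique ((qp_lim _ _ hq1).const_mul _)
    (((qp_lim (a * x) q hq1).mul hlim).congr fun N => (hit N).symm)

theorem psi_q (q a x : ℂ) (hq0 : q ≠ 0) (hq1 : ‖q‖ < 1)
    (ham : ∀ m : ℤ, a ≠ q ^ m) (hx2 : ‖x‖ < 1) :
    (∑' n, psiT q a q x n) * qPochInf x q =
      qPochInf (a * x) q * (qPochInf q q / qPochInf a q) := by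
  rw [← q_binom q a x hq0 hq1 ham hx2]
  congr 1
  have hz : ∀ n : ℤ, n < 0 → psiT q a q x n = 0 := by
    intro n hn
    obtain ⟨k, hk⟩ := Int.eq_ofNat_of_zero_le (show 0 ≤ -n - 1 by omega)
    have : qPochInf (q * q ^ n) q = 0 := by
      have h := qp_iter (q * q ^ n) q hq1 (k + 1)
      rw [Finset.prod_range_succ] at h
      have e : q * q ^ n * q ^ k = 1 := by
        have : n = -(k : ℤ) - 1 := by omega
        rw [this, zpow_sub_one₀ hq0, zpow_neg, zpow_natCast]
        field_simp
      rw [h, e]; simp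
    simp [psiT, this]
  have hinj : Function.Injective (fun n : ℕ => (n : ℤ)) := Nat.cast_injective
  rw [← hinj.tsum_eq]
  · refine tsum_congr fun n => ?_
    simp [psiT]
  · intro n hn
    by_contra h
    apply hn
    apply hz
    by_contra h'
    exact h ⟨n.toNat, by simp; omega⟩

theorem theta_step (q z : ℂ) (hq0 : q ≠ 0) (hq1 : ‖q‖ < 1) (hz : z ≠ 0) :
    qPochInf z q * qPochInf (q / z) q = -z * (qPochInf (z * q) q * qPochInf (q / (z * q)) q) := by
  rw [qp_step z q hq1, qp_step (q / (z * q)) q hq1]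
  have : q / (z * q) * q = q / z := by field_simp
  rw [this]
  field_simp
  ring

theorem psi0_large (q a x : ℂ) (hq0 : q ≠ 0) (hq1 : ‖q‖ < 1) (ha0 : a ≠ 0)
    (hx0 : x ≠ 0) (ham : ∀ m : ℤ, a ≠ q ^ m) (hx1 : ‖q‖ < ‖a‖ * ‖x‖) (hx2 : ‖x‖ < 1) :
    (∑' n, psiT q a 0 x n) * (qPochInf a q * qPochInf (q / a) q) * qPochInf x q =
      qPochInf (a * x) q * qPochInf (q / (a * x)) q * qPochInf q q := by
  have h1 := psi_zero q a q x hq0 hq1 ha0 hx0 ham hx1 hx2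
  have h2 := psi_q q a x hq0 hq1 ham hx2
  have h3 := qp_ne_zpow a q hq0 hq1 ham
  field_simp at h2
  linear_combination (-qPochInf a q * qPochInf x q) * h1 + qPochInf (q / (a * x)) q * h2

theorem psi0_shift (q a x : ℂ) (hq0 : q ≠ 0) (hq1 : ‖q‖ < 1) (ha0 : a ≠ 0)
    (hx0 : x ≠ 0)
    (h : (∑' n, psiT q a 0 x n) * (qPochInf a q * qPochInf (q / a) q) * qPochInf x q =
      qPochInf (a * x) q * qPochInf (q / (a * x)) q * qPochInf q q) :
    (∑' n, psiT q (a * q) 0 x n) *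
      (qPochInf (a * q) q * qPochInf (q / (a * q)) q) * qPochInf x q =
      qPochInf (a * q * x) q * qPochInf (q / (a * q * x)) q * qPochInf q q := by
  have e : ∑' n, psiT q a 0 x n = x * ∑' n, psiT q (a * q) 0 x n := by
    rw [← (Equiv.addRight (1 : ℤ)).tsum_eq, ← tsum_mul_left]
    refine tsum_congr fun n => ?_
    simp only [Equiv.coe_addRight, psiT, zero_mul, qp_zero]
    rw [zpow_add_one₀ hq0, zpow_add_one₀ hx0, ← mul_assoc a, mul_right_comm a]
    ring
  rw [theta_step q a hq0 hq1 ha0, theta_step q (a * x) hq0 hq1 (mul_ne_zero ha0 hx0), e] at h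
  rw [mul_right_comm a q x]
  refine mul_left_cancel₀ (mul_ne_zero ha0 hx0) ?_
  linear_combination -h

theorem psi0 (q x : ℂ) (hq0 : q ≠ 0) (hq1 : ‖q‖ < 1)
    (hx0 : x ≠ 0) (hx2 : ‖x‖ < 1) (k : ℕ) : ∀ a : ℂ, a ≠ 0 → (∀ m : ℤ, a ≠ q ^ m) →
    ‖q‖ * ‖q‖ ^ k < ‖a‖ * ‖x‖ → 
    (∑' n, psiT q a 0 x n) * (qPochInf a q * qPochInf (q / a) q) * qPochInf x q =
      qPochInf (a * x) q * qPochInf (q / (a * x)) q * qPochInf q q := by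
  induction k with
  | zero =>
    intro a ha0 ham h
    exact psi0_large q a x hq0 hq1 ha0 hx0 ham (by simpa using h) hx2
  | succ k ih =>
    intro a ha0 ham h
    have hρ0 : 0 < ‖q‖ := norm_pos_iff.mpr hq0
    have := psi0_shift q (a / q) x hq0 hq1 (div_ne_zero ha0 hq0) hx0
      (ih (a / q) (div_ne_zero ha0 hq0) (fun m hm => ham (m + 1) (by
        rw [zpow_add_one₀ hq0, ← hm]; field_simp)) (by
        rw [norm_div, div_mul_eq_mul_div, lt_div_iff₀ hρ0, mul_assoc, ← pow_succ]; exact h))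
    rwa [div_mul_cancel₀ _ hq0] at this

/-- Ramanujan's `₁ψ₁` summation formula. -/
theorem ramanujan_1psi1 (q a b x : ℂ)
    (hq0 : 0 < ‖q‖) (hq1 : ‖q‖ < 1)
    (hx1 : ‖b / a‖ < ‖x‖) (hx2 : ‖x‖ < 1)
    (ha0 : a ≠ 0) (hx0 : x ≠ 0)
    (ham : ∀ m : ℤ, a ≠ q ^ m) (hbm : ∀ m : ℤ, b ≠ q ^ m) :
    Summable (fun n : ℤ => (qPochInt a q n / qPochInt b q n) * x ^ n) ∧
    ∑' n : ℤ, (qPochInt a q n / qPochInt b q n) * x ^ n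
    = qPochInf q q * qPochInf (b / a) q * qPochInf (a * x) q * qPochInf (q / (a * x)) q /
      (qPochInf b q * qPochInf (q / a) q * qPochInf x q * qPochInf (b / (a * x)) q) := by
  have hq : q ≠ 0 := norm_pos_iff.mp hq0
  have hap : 0 < ‖a‖ := norm_pos_iff.mpr ha0
  have hxp : 0 < ‖x‖ := norm_pos_iff.mpr hx0
  have hb : ‖b‖ < ‖a‖ * ‖x‖ := by
    rw [norm_div, div_lt_iff₀ hap] at hx1
    linarith
  have hPa := qp_ne_zpow a q hq hq1 ham
  have hPb := qp_ne_zpow b q hq hq1 hbm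
  have hPqa : qPochInf (q / a) q ≠ 0 := by
    refine qp_ne_zpow _ q hq hq1 fun m hm => ham (1 - m) ?_
    rw [zpow_sub₀ hq, ← hm, zpow_one]
    field_simp
  have hPx := qp_ne_small x q hq1 hx2
  have hPbx : qPochInf (b / (a * x)) q ≠ 0 := by
    refine qp_ne_small _ q hq1 ?_
    rw [norm_div, norm_mul, div_lt_one (by positivity)]
    exact hb
  have ht : ∀ n : ℤ, (qPochInt a q n / qPochInt b q n) * x ^ n =
      qPochInf a q / qPochInf b q * psiT q a b x n := by
    intro n
    simp only [qPochInt, psiT]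
    rw [div_div_div_eq]
    ring
  have hs := psiT_summable q a b x hq hq1 ha0 hx0 ham hb hx2
  refine ⟨(hs.mul_left _).congr fun n => (ht n).symm, ?_⟩
  rw [tsum_congr ht, tsum_mul_left]
  have h1 := psi_zero q a b x hq hq1 ha0 hx0 ham hb hx2
  obtain ⟨k, hk⟩ : ∃ k : ℕ, ‖q‖ * ‖q‖ ^ k < ‖a‖ * ‖x‖ := by
    have : Tendsto (fun k : ℕ => ‖q‖ * ‖q‖ ^ k) atTop (𝓝 (‖q‖ * 0)) :=
      (tendsto_pow_atTop_nhds_zero_of_lt_one hq0.le hq1).const_mul _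
    rw [mul_zero] at this
    exact (this.eventually_lt_const (mul_pos hap hxp)).exists
  have h2 := psi0 q x hq hq1 hx0 hx2 k a ha0 ham hk
  rw [div_mul_eq_mul_div, div_eq_div_iff hPb (by simp [hPb, hPqa, hPx, hPbx])]
  linear_combination (qPochInf a q * qPochInf b q * qPochInf (q / a) q * qPochInf x q) * h1 +
    qPochInf b q * qPochInf (b / a) q * h2
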